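/- arXiv:0910.3619 — 6 statements merged into one kernel-verified Lean document; each statement's English description precedes it below -/
import Mathlib

section
/- Let R be a commutative ring, m ≤ n, A an n×n matrix and B an n×m matrix over R. Suppose M is an invertible n×n matrix, N an invertible m×m matrix, and Δ an m×m matrix over R such that M·B·N equals the block matrix having Δ as its first m rows and the (n−m)×m zero matrix as its last n−m rows. Let G be the m×n matrix formed by the first m rows of M·A and F the (n−m)×n matrix formed by the last n−m rows of M·A. Then for every x : Fin n → R and u : Fin m → R, one has A.mulVec x = B.mulVec u if and only if F.mulVec x = 0 and Δ.mulVec ((N⁻¹).mulVec u) = G.mulVec x. -/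
/-!
Multiplying `A x = B u` on the left by `M` does not change its solutions, since `M` acts
injectively. Writing `u = N (N⁻¹ u)` turns the right-hand side into `(M B N) (N⁻¹ u)`, whose lower
block vanishes, and the two blocks of rows can then be compared separately.
-/

section

open Matrix

variable {R k l m n p q : Type*} [Semiring R] [Fintype l] [Fintype n] [Fintype p] [Fintype q]

theorem mulVec_eq_mulVec_iff_mul_mulVec {M : Matrix m l R} (hM : Function.Injective M.mulVec)
    (A : Matrix l n R) (B : Matrix l p R) (x : n → R) (u : p → R) :
    A *ᵥ x = B *ᵥ u ↔ (M * A) *ᵥ x = (M * B) *ᵥ u := by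
  rw [← mulVec_mulVec, ← mulVec_mulVec, hM.eq_iff]

theorem mul_mulVec_mulVec_of_mul_eq_one [DecidableEq p] {N : Matrix p q R} {N' : Matrix q p R}
    (hN : N * N' = 1) (C : Matrix m p R) (u : p → R) :
    (C * N) *ᵥ (N' *ᵥ u) = C *ᵥ u := by
  rw [mulVec_mulVec, Matrix.mul_assoc, hN, Matrix.mul_one]

theorem fromRows_mulVec_eq_fromRows_mulVec_iff (G : Matrix m n R) (F : Matrix k n R)
    (C : Matrix m p R) (D : Matrix k p R) (x : n → R) (v : p → R) :
    fromRows G F *ᵥ x = fromRows C D *ᵥ v ↔ G *ᵥ x = C *ᵥ v ∧ F *ᵥ x = D *ᵥ v := by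
  rw [fromRows_mulVec, fromRows_mulVec, Sum.elim_eq_iff]

theorem explicit_iff_semiImplicit_general [DecidableEq p] {A : Matrix l n R} {B : Matrix l p R}
    {M : Matrix (m ⊕ k) l R} {N : Matrix p q R} {N' : Matrix q p R} {Δ : Matrix m q R}
    {G : Matrix m n R} {F : Matrix k n R} (hM : Function.Injective M.mulVec) (hN : N * N' = 1)
    (hMBN : M * B * N = fromRows Δ 0) (hMA : M * A = fromRows G F) (x : n → R) (u : p → R) :
    A *ᵥ x = B *ᵥ u ↔ F *ᵥ x = 0 ∧ Δ *ᵥ (N' *ᵥ u) = G *ᵥ x := by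
  calc
    A *ᵥ x = B *ᵥ u
      ↔ (M * A) *ᵥ x = (M * B) *ᵥ u := mulVec_eq_mulVec_iff_mul_mulVec hM A B x u
    _ ↔ fromRows G F *ᵥ x = fromRows Δ 0 *ᵥ (N' *ᵥ u) := by
      rw [← mul_mulVec_mulVec_of_mul_eq_one hN (M * B), hMBN, hMA]
    _ ↔ G *ᵥ x = Δ *ᵥ (N' *ᵥ u) ∧ F *ᵥ x = 0 := by
      rw [fromRows_mulVec_eq_fromRows_mulVec_iff, zero_mulVec]
    _ ↔ F *ᵥ x = 0 ∧ Δ *ᵥ (N' *ᵥ u) = G *ᵥ x := by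
      rw [and_comm, eq_comm (a := G *ᵥ x)]

end

/-- Proposition 2 (first part): equivalence of the explicit representation `Ax = Bu`
with the semi-implicit representation obtained from a Smith-Jacobson decomposition of `B`.
Here `Fin n` is identified with `Fin m ⊕ Fin k` (with `k = n - m`). -/
theorem explicit_iff_semiImplicit {R : Type*} [CommRing R] (m k : ℕ)
    (A : Matrix (Fin m ⊕ Fin k) (Fin m ⊕ Fin k) R)
    (B : Matrix (Fin m ⊕ Fin k) (Fin m) R)
    (M : Matrix (Fin m ⊕ Fin k) (Fin m ⊕ Fin k) R)
    (N Δ : Matrix (Fin m) (Fin m) R)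
    (hM : IsUnit M) (hN : IsUnit N)
    (hMBN : M * B * N = Matrix.fromRows Δ (0 : Matrix (Fin k) (Fin m) R))
    (G : Matrix (Fin m) (Fin m ⊕ Fin k) R) (hG : G = (M * A).submatrix Sum.inl id)
    (F : Matrix (Fin k) (Fin m ⊕ Fin k) R) (hF : F = (M * A).submatrix Sum.inr id) :
    ∀ (x : Fin m ⊕ Fin k → R) (u : Fin m → R),
      A.mulVec x = B.mulVec u ↔
        (F.mulVec x = 0 ∧ Δ.mulVec (N⁻¹.mulVec u) = G.mulVec x) :=
  have hMA : M * A = Matrix.fromRows G F := by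
    rw [hG, hF]
    exact (Matrix.fromRows_toRows (M * A)).symm
  have hNN : N * N⁻¹ = 1 := N.mul_nonsing_inv ((Matrix.isUnit_iff_isUnit_det N).mp hN)
  explicit_iff_semiImplicit_general (Matrix.mulVec_injective_of_isUnit hM) hNN hMBN hMA
end

section
/- Let R be a commutative ring, m ≤ n, A an n×n matrix and B an n×m matrix over R. Suppose B is hyper-regular, i.e. there exist an invertible n×n matrix M and an invertible m×m matrix N over R such that M·B·N equals the block matrix having the m×m identity as its first m rows and the (n−m)×m zero matrix as its last n−m rows. Let G be the m×n matrix formed by the first m rows of M·A and F the (n−m)×n matrix formed by the last n−m rows of M·A. Then for every x : Fin n → R and u : Fin m → R, one has A.mulVec x = B.mulVec u if and only if F.mulVec x = 0 and u = (N·G).mulVec x. In particular the input u is uniquely determined by x, and the explicit system Ax = Bu is equivalent to the implicit system Fx = 0 together with the recovery formula u = N·G·x. -/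
/-!
Multiplying `Ax = Bu` by `M` and writing `u = Nv` turns it into `MAx = MBNv`, whose right-hand side
is `v` stacked over `0`. Comparing blocks leaves `Fx = 0` and `v = Gx`, and `v` is recovered from
`u` because `MBN`, hence `N`, is injective.
-/

open Function Matrix

section

variable {R l m n : Type*} [Fintype m] [Fintype n]

theorem mulVec_injective_of_mul [NonUnitalSemiring R] {A : Matrix l m R} {B : Matrix m n R}
    (hAB : Injective (A * B).mulVec) : Injective B.mulVec := by
  intro v w (hvw : B *ᵥ v = B *ᵥ w)
  exact hAB (by rw [← mulVec_mulVec, hvw, mulVec_mulVec])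

theorem mulVec_eq_sumElim_iff [NonUnitalNonAssocSemiring R] {m₁ m₂ : Type*}
    {A : Matrix (m₁ ⊕ m₂) n R} {x : n → R} {v : m₁ → R} {w : m₂ → R} :
    A *ᵥ x = Sum.elim v w ↔ A.toRows₁ *ᵥ x = v ∧ A.toRows₂ *ᵥ x = w := by
  rw [funext_iff, Sum.forall, funext_iff, funext_iff]
  rfl

theorem fromRows_one_zero_mulVec [NonAssocSemiring R] [DecidableEq m] (v : m → R) :
    fromRows (1 : Matrix m m R) (0 : Matrix l m R) *ᵥ v = Sum.elim v 0 :=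
  mulVec_eq_sumElim_iff.2 ⟨one_mulVec v, zero_mulVec v⟩

theorem fromRows_one_zero_mulVec_injective [NonAssocSemiring R] [DecidableEq m] :
    Injective (fromRows (1 : Matrix m m R) (0 : Matrix l m R)).mulVec := by
  intro v w hvw
  simp only [fromRows_one_zero_mulVec] at hvw
  exact congrArg (· ∘ Sum.inl) hvw

end

theorem explicit_iff_implicit_of_hyperRegular_general {R m k n p q : Type*} [Semiring R]
    [Fintype m] [DecidableEq m] [Fintype n] [Fintype p] [Fintype q]
    {A : Matrix n p R} {B : Matrix n q R} {M : Matrix (m ⊕ k) n R} {N : Matrix q m R}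
    (hM : Injective M.mulVec) (hN : Surjective N.mulVec)
    (hMBN : M * B * N = fromRows (1 : Matrix m m R) (0 : Matrix k m R)) (x : p → R) (u : q → R) :
    A *ᵥ x = B *ᵥ u ↔
      (M * A).toRows₂ *ᵥ x = 0 ∧ u = (N * (M * A).toRows₁) *ᵥ x := by
  have hN_inj : Injective N.mulVec :=
    mulVec_injective_of_mul (A := M * B) (hMBN ▸ fromRows_one_zero_mulVec_injective)
  obtain ⟨v, rfl⟩ := hN u
  calc
    A *ᵥ x = B *ᵥ (N *ᵥ v) ↔ M *ᵥ (A *ᵥ x) = M *ᵥ (B *ᵥ (N *ᵥ v)) := hM.eq_iff.symm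
    _ ↔ (M * A) *ᵥ x = Sum.elim v 0 := by
      simp only [mulVec_mulVec, ← Matrix.mul_assoc, hMBN, fromRows_one_zero_mulVec]
    _ ↔ (M * A).toRows₁ *ᵥ x = v ∧ (M * A).toRows₂ *ᵥ x = 0 := mulVec_eq_sumElim_iff
    _ ↔ (M * A).toRows₂ *ᵥ x = 0 ∧ N *ᵥ v = (N * (M * A).toRows₁) *ᵥ x := by
      rw [← mulVec_mulVec, hN_inj.eq_iff, eq_comm (a := v), and_comm]

/-- Proposition 2 (second part): if `B` is hyper-regular, the explicit system `Ax = Bu`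
is equivalent to the implicit system `Fx = 0` together with the recovery formula
`u = N·G·x`.  Here `Fin n` is identified with `Fin m ⊕ Fin k` (with `k = n - m`). -/
theorem explicit_iff_implicit_of_hyperRegular {R : Type*} [CommRing R] (m k : ℕ)
    (A : Matrix (Fin m ⊕ Fin k) (Fin m ⊕ Fin k) R)
    (B : Matrix (Fin m ⊕ Fin k) (Fin m) R)
    (M : Matrix (Fin m ⊕ Fin k) (Fin m ⊕ Fin k) R)
    (N : Matrix (Fin m) (Fin m) R)
    (hM : IsUnit M) (hN : IsUnit N)
    (hMBN : M * B * N =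
      Matrix.fromRows (1 : Matrix (Fin m) (Fin m) R) (0 : Matrix (Fin k) (Fin m) R))
    (G : Matrix (Fin m) (Fin m ⊕ Fin k) R) (hG : G = (M * A).submatrix Sum.inl id)
    (F : Matrix (Fin k) (Fin m ⊕ Fin k) R) (hF : F = (M * A).submatrix Sum.inr id) :
    ∀ (x : Fin m ⊕ Fin k → R) (u : Fin m → R),
      A.mulVec x = B.mulVec u ↔ (F.mulVec x = 0 ∧ u = (N * G).mulVec x) := by
  subst hG hF
  exact explicit_iff_implicit_of_hyperRegular_general
    (mulVec_injective_of_isUnit hM) (mulVec_surjective_iff_isUnit.2 hN) hMBN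
end

section
/- Let R be a principal ideal domain (a commutative domain satisfying IsPrincipalIdealRing), and let M be a p×q matrix over R. Then there exist an invertible p×p matrix U and an invertible q×q matrix V over R such that the matrix D := U·M·V is 'rectangular diagonal', i.e. D i j = 0 whenever the natural-number values of i and j differ, and the diagonal entries satisfy the divisibility chain: for all valid indices i ≤ j, D i i divides D j j. -/
/-!
Read the matrix as a linear map `f : M → N` of free modules and choose a value
`d = φ (f x)`, with `φ` a linear form on `N`, that is maximal under divisibility. Because `d`
cannot be improved by a gcd, it divides every value `ψ (f y)`, so `f = d • g`, and `φ (g x) = 1` if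
`d ≠ 0`. Hence `M = R x ⊕ ker (φ ∘ g)` and `N = R (g x) ⊕ ker φ`, and `g` respects these splittings.
By induction on the rank, `g` has a Smith form beginning with `1`; multiplying it by `d` keeps the
divisibility chain.
-/

open Module

section MaximalValue

variable {R : Type*} [CommRing R]

theorem exists_forall_dvd_of_dvd [IsNoetherianRing R] {ι : Type*} [Nonempty ι] (a : ι → R) :
    ∃ i, ∀ j, a j ∣ a i → a i ∣ a j := by
  obtain ⟨i, -, hi⟩ := exists_maximalFor_of_wellFoundedGT (fun _ : ι ↦ True)
    (fun i ↦ Ideal.span {a i}) ⟨Classical.arbitrary ι, trivial⟩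
  refine ⟨i, fun j hj ↦ ?_⟩
  rw [← Ideal.span_singleton_le_span_singleton] at hj ⊢
  exact hi trivial hj

variable {M N : Type*} [AddCommGroup M] [AddCommGroup N] [Module R M] [Module R N]

theorem exists_apply_dvd_and_apply_dvd [IsBezout R] (φ : M →ₗ[R] R) (x y : M) :
    ∃ z, φ z ∣ φ x ∧ φ z ∣ φ y := by
  obtain ⟨a, b, hab⟩ := IsBezout.gcd_eq_sum (φ x) (φ y)
  have hz : φ (a • x + b • y) = IsBezout.gcd (φ x) (φ y) := by simp [hab]
  exact ⟨a • x + b • y, hz ▸ IsBezout.gcd_dvd_left _ _, hz ▸ IsBezout.gcd_dvd_right _ _⟩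

theorem forall_apply_dvd_of_maximal [IsBezout R] (B : M →ₗ[R] N →ₗ[R] R) {x : M} {y : N}
    (hmax : ∀ x' y', B x' y' ∣ B x y → B x y ∣ B x' y') (x' : M) (y' : N) :
    B x y ∣ B x' y' := by
  have dvd_right {u : M} (hu : B u y = B x y) (w : N) : B x y ∣ B u w := by
    obtain ⟨z, hzy, hzw⟩ := exists_apply_dvd_and_apply_dvd (B u) y w
    exact (hmax u z (hu ▸ hzy)).trans hzw
  have dvd_left (u : M) : B x y ∣ B u y := by
    obtain ⟨z, hzx, hzu⟩ := exists_apply_dvd_and_apply_dvd (B.flip y) x u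
    exact (hmax z y hzx).trans hzu
  obtain ⟨c, hc⟩ := dvd_left x'
  have hattains : B (x' + (1 - c) • x) y = B x y := by
    simp only [map_add, map_smul, LinearMap.add_apply, LinearMap.smul_apply, smul_eq_mul, hc]
    ring
  have hdvd : B x y ∣ B x' y' + (1 - c) * B x y' := by simpa using dvd_right hattains y'
  exact (dvd_add_left ((dvd_right rfl y').mul_left _)).1 hdvd

theorem exists_forall_apply_dvd [IsPrincipalIdealRing R] (B : M →ₗ[R] N →ₗ[R] R) :
    ∃ x y, ∀ x' y', B x y ∣ B x' y' := by
  obtain ⟨⟨x, y⟩, hmax⟩ := exists_forall_dvd_of_dvd fun p : M × N ↦ B p.1 p.2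
  exact ⟨x, y, forall_apply_dvd_of_maximal B fun x' y' ↦ hmax (x', y')⟩

theorem exists_eq_smul_of_forall_dvd [Free R M] {d : R} {v : M}
    (hd : ∀ φ : Dual R M, d ∣ φ v) : ∃ w, v = d • w := by
  let b := Free.chooseBasis R M
  choose k hk using fun i ↦ hd (b.coord i)
  refine ⟨∑ i ∈ (b.repr v).support, k i • b i, ?_⟩
  calc v = ∑ i ∈ (b.repr v).support, b.repr v i • b i := (b.linearCombination_repr v).symm
    _ = ∑ i ∈ (b.repr v).support, d • k i • b i := by
      simp only [← b.coord_apply, hk, mul_smul]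
    _ = d • ∑ i ∈ (b.repr v).support, k i • b i := Finset.smul_sum.symm

theorem exists_linearMap_eq_smul_of_forall_dvd [Free R M] [Free R N] {d : R} {f : M →ₗ[R] N}
    (hd : ∀ (φ : Dual R N) (x : M), d ∣ φ (f x)) : ∃ g : M →ₗ[R] N, f = d • g := by
  let b := Free.chooseBasis R M
  choose w hw using fun i ↦ exists_eq_smul_of_forall_dvd fun φ ↦ hd φ (b i)
  exact ⟨b.constr R w, b.ext fun i ↦ by simp [hw]⟩

theorem exists_eq_smul_and_apply_eq_one [IsDomain R] [IsPrincipalIdealRing R] [Free R M]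
    [Free R N] {f : M →ₗ[R] N} (hf : f ≠ 0) :
    ∃ (d : R) (g : M →ₗ[R] N) (φ : Dual R N) (x : M), f = d • g ∧ φ (g x) = 1 := by
  obtain ⟨φ, x, hdvd⟩ := exists_forall_apply_dvd f.dualMap
  obtain ⟨g, hg⟩ := exists_linearMap_eq_smul_of_forall_dvd hdvd
  set d := f.dualMap φ x with hd
  have hd0 : d ≠ 0 := by
    intro h
    exact hf (by rw [hg, h, zero_smul])
  refine ⟨d, g, φ, x, hg, mul_left_cancel₀ hd0 ?_⟩
  calc d * φ (g x) = φ (f x) := by simp [hg]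
    _ = d * 1 := by rw [mul_one, hd, LinearMap.dualMap_apply]

end MaximalValue

section KernelBasis

variable {R M : Type*} [Ring R] [AddCommGroup M] [Module R M] {n : ℕ}

/-- The basis of `M = R x ⊕ ker φ` obtained from a basis of `ker φ` by putting in front of it a
vector `x` with `φ x = 1`. -/
noncomputable def basisConsKer (φ : M →ₗ[R] R) (x : M) (hx : φ x = 1)
    (b : Basis (Fin n) R φ.ker) : Basis (Fin (n + 1)) R M :=
  Basis.mkFinCons x b
    (fun c y hy h ↦ by simpa [hx, LinearMap.mem_ker.1 hy] using congrArg φ h)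
    (fun z ↦ ⟨-φ z, by simp [hx]⟩)

theorem finrank_ker_lt_of_apply_eq_one [StrongRankCondition R] {φ : M →ₗ[R] R}
    [Free R φ.ker] [Module.Finite R φ.ker] {x : M} (hx : φ x = 1) :
    finrank R φ.ker < finrank R M := by
  simp [finrank_eq_card_basis (basisConsKer φ x hx (finBasis R φ.ker))]

variable {φ : M →ₗ[R] R} {x : M} (hx : φ x = 1) (b : Basis (Fin n) R φ.ker)

@[simp]
theorem basisConsKer_zero : basisConsKer φ x hx b 0 = x := by
  simp [basisConsKer]

@[simp]
theorem basisConsKer_succ (i : Fin n) : basisConsKer φ x hx b i.succ = b i := by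
  simp [basisConsKer]

theorem basisConsKer_repr_self : (basisConsKer φ x hx b).repr x = Finsupp.single 0 1 := by
  simpa using (basisConsKer φ x hx b).repr_self 0

theorem basisConsKer_repr_coe_zero (v : φ.ker) : (basisConsKer φ x hx b).repr v 0 = 0 := by
  have h : (basisConsKer φ x hx b).coord 0 ∘ₗ φ.ker.subtype = 0 := b.ext fun j ↦ by
    rw [LinearMap.comp_apply, Submodule.subtype_apply, ← basisConsKer_succ hx b]
    simp [-basisConsKer_succ]
  exact LinearMap.congr_fun h v

theorem basisConsKer_repr_coe_succ (v : φ.ker) (i : Fin n) :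
    (basisConsKer φ x hx b).repr v i.succ = b.repr v i := by
  have h : (basisConsKer φ x hx b).coord i.succ ∘ₗ φ.ker.subtype = b.coord i := b.ext fun j ↦ by
    rw [LinearMap.comp_apply, Submodule.subtype_apply, ← basisConsKer_succ hx b]
    simp [-basisConsKer_succ, Finsupp.single_apply]
  exact LinearMap.congr_fun h v

end KernelBasis

/-- Smith form of a rectangular matrix: only the entries `D i i` may be nonzero, and each of them
divides all later ones. Row and column indices have different types, so they are compared through
their values in `ℕ`. -/
structure IsSmithForm {R : Type*} [CommRing R] {p q : ℕ} (D : Matrix (Fin p) (Fin q) R) :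
    Prop where
  apply_eq_zero : ∀ (i : Fin p) (j : Fin q), (i : ℕ) ≠ (j : ℕ) → D i j = 0
  apply_dvd_apply : ∀ (i i' : Fin p) (j j' : Fin q),
    (i : ℕ) = (j : ℕ) → (i' : ℕ) = (j' : ℕ) → (i : ℕ) ≤ (i' : ℕ) → D i j ∣ D i' j'

namespace IsSmithForm

variable {R : Type*} [CommRing R] {p q : ℕ}

theorem zero : IsSmithForm (0 : Matrix (Fin p) (Fin q) R) :=
  ⟨fun _ _ _ ↦ rfl, fun _ _ _ _ _ _ _ ↦ dvd_rfl⟩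

theorem smul {D : Matrix (Fin p) (Fin q) R} (hD : IsSmithForm D) (d : R) :
    IsSmithForm (d • D) where
  apply_eq_zero i j hij := by simp [hD.apply_eq_zero i j hij]
  apply_dvd_apply i i' j j' hij hij' hle :=
    mul_dvd_mul_left d (hD.apply_dvd_apply i i' j j' hij hij' hle)

theorem of_submatrix_succ {D : Matrix (Fin (p + 1)) (Fin (q + 1)) R}
    (hdvd : ∀ i j, D 0 0 ∣ D i j) (hrow : ∀ j : Fin q, D 0 j.succ = 0)
    (hcol : ∀ i : Fin p, D i.succ 0 = 0) (hD : IsSmithForm (D.submatrix Fin.succ Fin.succ)) :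
    IsSmithForm D where
  apply_eq_zero i j hij := by
    cases i using Fin.cases with
    | zero =>
      cases j using Fin.cases with
      | zero => exact absurd rfl hij
      | succ j => exact hrow j
    | succ i =>
      cases j using Fin.cases with
      | zero => exact hcol i
      | succ j => exact hD.apply_eq_zero i j (by simpa using hij)
  apply_dvd_apply i i' j j' hij hij' hle := by
    cases i using Fin.cases with
    | zero =>
      obtain rfl : j = 0 := Fin.ext hij.symm
      exact hdvd i' j'
    | succ i =>
      obtain ⟨j, rfl⟩ := Fin.exists_succ_eq.2 (show j ≠ 0 by rintro rfl; simp at hij)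
      obtain ⟨i', rfl⟩ := Fin.exists_succ_eq.2 (show i' ≠ 0 by rintro rfl; simp at hle)
      obtain ⟨j', rfl⟩ := Fin.exists_succ_eq.2 (show j' ≠ 0 by rintro rfl; simp at hij')
      exact hD.apply_dvd_apply i i' j j' (by simpa using hij) (by simpa using hij')
        (by simpa using hle)

end IsSmithForm

theorem IsSmithForm.toMatrix_basisConsKer {R M N : Type*} [CommRing R] [AddCommGroup M]
    [AddCommGroup N] [Module R M] [Module R N] {g : M →ₗ[R] N} {φ : N →ₗ[R] R} {x : M}
    (hx : φ (g x) = 1) {m n : ℕ} {b : Basis (Fin m) R (φ ∘ₗ g).ker} {c : Basis (Fin n) R φ.ker}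
    (h : IsSmithForm (LinearMap.toMatrix b c (g.restrict fun _ hy ↦ hy))) :
    IsSmithForm
      (LinearMap.toMatrix (basisConsKer (φ ∘ₗ g) x hx b) (basisConsKer φ (g x) hx c) g) := by
  have hcoe (j : Fin m) : g (b j) = (g.restrict (fun _ hy ↦ hy) (b j) : φ.ker) := rfl
  refine .of_submatrix_succ (fun i j ↦ ?_) (fun j ↦ ?_) (fun i ↦ ?_) ?_
  · simp [LinearMap.toMatrix_apply, basisConsKer_repr_self]
  · rw [LinearMap.toMatrix_apply, basisConsKer_succ, hcoe, basisConsKer_repr_coe_zero]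
  · simp [LinearMap.toMatrix_apply, basisConsKer_repr_self]
  · convert h using 1
    ext i j
    rw [Matrix.submatrix_apply, LinearMap.toMatrix_apply, LinearMap.toMatrix_apply,
      basisConsKer_succ, hcoe, basisConsKer_repr_coe_succ]

theorem exists_basis_isSmithForm_toMatrix {R M N : Type*} [CommRing R] [IsDomain R]
    [IsPrincipalIdealRing R] [AddCommGroup M] [AddCommGroup N] [Module R M] [Module R N]
    [Free R M] [Module.Finite R M] [Free R N] [Module.Finite R N] (f : M →ₗ[R] N) :
    ∃ (m n : ℕ) (b : Basis (Fin m) R M) (c : Basis (Fin n) R N),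
      IsSmithForm (LinearMap.toMatrix b c f) := by
  by_cases hf : f = 0
  · exact ⟨_, _, finBasis R M, finBasis R N, by simpa [hf] using IsSmithForm.zero⟩
  obtain ⟨d, g, φ, x, rfl, hx⟩ := exists_eq_smul_and_apply_eq_one hf
  obtain ⟨m, n, b, c, hbc⟩ := exists_basis_isSmithForm_toMatrix
    (g.restrict fun _ hy ↦ hy : (φ ∘ₗ g).ker →ₗ[R] φ.ker)
  refine ⟨m + 1, n + 1, basisConsKer _ x hx b, basisConsKer φ (g x) hx c, ?_⟩
  rw [map_smul]
  exact (IsSmithForm.toMatrix_basisConsKer hx hbc).smul d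
termination_by finrank R M
decreasing_by exact finrank_ker_lt_of_apply_eq_one hx

/-- Smith-Jacobson (diagonal) decomposition, Theorem 1 of the paper, in the commutative
case: every `p × q` matrix over a principal ideal domain is equivalent, via invertible
matrices `U` and `V`, to a rectangular diagonal matrix whose diagonal entries form a
divisibility chain. -/
theorem smith_jacobson_decomposition {R : Type*} [CommRing R] [IsDomain R]
    [IsPrincipalIdealRing R] (p q : ℕ) (M : Matrix (Fin p) (Fin q) R) :
    ∃ (U : Matrix (Fin p) (Fin p) R) (V : Matrix (Fin q) (Fin q) R),
      IsUnit U ∧ IsUnit V ∧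
      (∀ (i : Fin p) (j : Fin q), (i : ℕ) ≠ (j : ℕ) → (U * M * V) i j = 0) ∧
      (∀ (i i' : Fin p) (j j' : Fin q),
        (i : ℕ) = (j : ℕ) → (i' : ℕ) = (j' : ℕ) → (i : ℕ) ≤ (i' : ℕ) →
        (U * M * V) i j ∣ (U * M * V) i' j') := by
  let e (n : ℕ) : Basis (Fin n) R (Fin n → R) := Pi.basisFun R (Fin n)
  obtain ⟨n, m, b, c, h⟩ := exists_basis_isSmithForm_toMatrix (Matrix.toLin (e q) (e p) M)
  obtain rfl : q = n := by simpa using finrank_eq_card_basis b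
  obtain rfl : p = m := by simpa using finrank_eq_card_basis c
  have hD : c.toMatrix (e p) * M * (e q).toMatrix b =
      LinearMap.toMatrix b c (Matrix.toLin (e q) (e p) M) := by
    rw [← basis_toMatrix_mul_linearMap_toMatrix_mul_basis_toMatrix b (e q) c (e p),
      LinearMap.toMatrix_toLin]
  rw [← hD] at h
  have hU := c.invertibleToMatrix (e p)
  have hV := (e q).invertibleToMatrix b
  exact ⟨_, _, isUnit_of_invertible _, isUnit_of_invertible _, h.apply_eq_zero, h.apply_dvd_apply⟩
end

section
/- Let τ be a real number and let y₁, y₂ : ℝ → ℝ be C^∞ functions (ContDiff ℝ ⊤). Write f⁽ᵏ⁾ for the k-th iterated derivative. Define x₁ := y₂, x₂ := y₁, x₃(t) := −y₁(t) + y₁⁽²⁾(t) − y₂(t−τ) + y₂⁽²⁾(t) + y₂⁽³⁾(t), x₄(t) := y₁⁽¹⁾(t) − y₁⁽²⁾(t) + y₂⁽¹⁾(t) − y₂⁽¹⁾(t−τ) + y₂⁽²⁾(t), u₁(t) := −y₁⁽³⁾(t) + y₂⁽¹⁾(t) − y₂⁽³⁾(t) − y₂⁽⁴⁾(t), u₂(t)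 := y₁⁽³⁾(t) + y₁⁽⁴⁾(t) − y₂⁽²⁾(t) + y₂⁽³⁾(t) + 2·y₂⁽⁴⁾(t) + y₂⁽⁵⁾(t). Then for all t ∈ ℝ the following four identities hold (where xᵢ⁽ᵏ⁾ denotes the k-th derivative of the function xᵢ): (1) x₁⁽¹⁾(t) + x₁⁽²⁾(t) − 2x₁⁽²⁾(t−τ) + x₁⁽³⁾(t) + x₁⁽⁴⁾(t−τ) − x₂⁽³⁾(t) + x₂⁽⁵⁾(t) − x₃⁽²⁾(t) − x₄⁽¹⁾(t) + x₄⁽³⁾(t) = u₁(t) + u₁⁽¹⁾(t) + u₂(t); (2) x₁⁽¹⁾(t) + x₁⁽¹⁾(t−τ) − x₁⁽¹⁾(t−2τ) + x₁⁽²⁾(t) + x₁⁽²⁾(t−τ) + x₁⁽²⁾(t−2τ) − x₁⁽³⁾(t−τ) + 2x₂⁽¹⁾(t) + x₂⁽¹⁾(t−τ) − x₂⁽²⁾(t) − x₂⁽⁴⁾(t) + x₃⁽¹⁾(t) + x₃⁽²⁾(t−τ) − x₄(t) − x₄(t−τ) − x₄⁽²⁾(t) = u₁⁽²⁾(t−τ)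 + u₂⁽¹⁾(t−τ); (3) −x₁(t−2τ) + x₁⁽¹⁾(t−3τ) + x₁⁽²⁾(t−2τ) − x₂(t−τ) + x₂⁽¹⁾(t−2τ) + x₂⁽³⁾(t−τ) − x₃(t−τ) + x₃⁽¹⁾(t−2τ) + x₄⁽¹⁾(t−τ) = u₁⁽¹⁾(t−2τ) + u₂(t−2τ); (4) x₁⁽¹⁾(t−τ) + x₂⁽¹⁾(t) + x₃⁽¹⁾(t) = u₁⁽¹⁾(t) + u₂(t). -/
/-!
The formulas for `x` and `u` apply polynomials with constant coefficients in `d/dt` and the delay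
`δ` to `y₁` and `y₂`. Such operators commute with `d/dt`, so differentiating `x` and `u` amounts to
differentiating `y₁` and `y₂`. Once the orders of derivatives and the delays are added up, each
equation of the system is an identity between polynomials in `d/dt` and `δ`, applied to `y₁` and
`y₂`. The highest derivatives that occur are `y₁⁽⁵⁾` and `y₂⁽⁶⁾`.
-/

section

variable {𝕜 F : Type*} [NontriviallyNormedField 𝕜] [NormedAddCommGroup F] [NormedSpace 𝕜 F]

theorem iteratedDeriv_iteratedDeriv (m n : ℕ) (f : 𝕜 → F) :
    iteratedDeriv m (iteratedDeriv n f) = iteratedDeriv (m + n) f := by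
  simp only [iteratedDeriv_eq_iterate, Function.iterate_add_apply]

theorem iteratedDeriv_comm (m n : ℕ) (f : 𝕜 → F) :
    iteratedDeriv m (iteratedDeriv n f) = iteratedDeriv n (iteratedDeriv m f) := by
  rw [iteratedDeriv_iteratedDeriv, iteratedDeriv_iteratedDeriv, add_comm]

theorem contDiff_iteratedDeriv {m n : WithTop ℕ∞} {k : ℕ} {f : 𝕜 → F} (hf : ContDiff 𝕜 n f)
    (h : m + k ≤ n) : ContDiff 𝕜 m (iteratedDeriv k f) := by
  induction k generalizing f n with
  | zero => simpa only [iteratedDeriv_zero] using hf.of_le (by simpa using h)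
  | succ k ih =>
    have hf' : ContDiff 𝕜 (m + k + 1) f := hf.of_le (by rwa [Nat.cast_succ, ← add_assoc] at h)
    rw [iteratedDeriv_succ']
    exact ih (contDiff_succ_iff_deriv.mp hf').2.2 le_rfl

/-- The two-input linear time-delay system (17) with states `xᵢ` and inputs `uᵢ`. The delay operator
`δ` is written out as the shift `t ↦ t - τ` of the argument. -/
structure IsDelaySystemSolution (τ : 𝕜) (x₁ x₂ x₃ x₄ u₁ u₂ : 𝕜 → F) : Prop where
  eq₁ (t : 𝕜) :
    iteratedDeriv 1 x₁ t + iteratedDeriv 2 x₁ t - (2 : 𝕜) • iteratedDeriv 2 x₁ (t - τ) +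
      iteratedDeriv 3 x₁ t + iteratedDeriv 4 x₁ (t - τ) - iteratedDeriv 3 x₂ t +
      iteratedDeriv 5 x₂ t - iteratedDeriv 2 x₃ t - iteratedDeriv 1 x₄ t +
      iteratedDeriv 3 x₄ t = u₁ t + iteratedDeriv 1 u₁ t + u₂ t
  eq₂ (t : 𝕜) :
    iteratedDeriv 1 x₁ t + iteratedDeriv 1 x₁ (t - τ) - iteratedDeriv 1 x₁ (t - 2 * τ) +
      iteratedDeriv 2 x₁ t + iteratedDeriv 2 x₁ (t - τ) + iteratedDeriv 2 x₁ (t - 2 * τ) -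
      iteratedDeriv 3 x₁ (t - τ) + (2 : 𝕜) • iteratedDeriv 1 x₂ t + iteratedDeriv 1 x₂ (t - τ) -
      iteratedDeriv 2 x₂ t - iteratedDeriv 4 x₂ t + iteratedDeriv 1 x₃ t +
      iteratedDeriv 2 x₃ (t - τ) - x₄ t - x₄ (t - τ) - iteratedDeriv 2 x₄ t =
      iteratedDeriv 2 u₁ (t - τ) + iteratedDeriv 1 u₂ (t - τ)
  eq₃ (t : 𝕜) :
    -x₁ (t - 2 * τ) + iteratedDeriv 1 x₁ (t - 3 * τ) + iteratedDeriv 2 x₁ (t - 2 * τ) -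
      x₂ (t - τ) + iteratedDeriv 1 x₂ (t - 2 * τ) + iteratedDeriv 3 x₂ (t - τ) -
      x₃ (t - τ) + iteratedDeriv 1 x₃ (t - 2 * τ) + iteratedDeriv 1 x₄ (t - τ) =
      iteratedDeriv 1 u₁ (t - 2 * τ) + u₂ (t - 2 * τ)
  eq₄ (t : 𝕜) :
    iteratedDeriv 1 x₁ (t - τ) + iteratedDeriv 1 x₂ t + iteratedDeriv 1 x₃ t =
      iteratedDeriv 1 u₁ t + u₂ t

/-- The third row of `x = Qy`: the state `x₃` in terms of the flat output. -/
noncomputable def flatState₃ (τ : 𝕜) (y₁ y₂ : 𝕜 → F) : 𝕜 → F := fun t =>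
  -y₁ t + iteratedDeriv 2 y₁ t - y₂ (t - τ) + iteratedDeriv 2 y₂ t + iteratedDeriv 3 y₂ t

/-- The fourth row of `x = Qy`: the state `x₄` in terms of the flat output. -/
noncomputable def flatState₄ (τ : 𝕜) (y₁ y₂ : 𝕜 → F) : 𝕜 → F := fun t =>
  iteratedDeriv 1 y₁ t - iteratedDeriv 2 y₁ t + iteratedDeriv 1 y₂ t -
    iteratedDeriv 1 y₂ (t - τ) + iteratedDeriv 2 y₂ t

/-- The first row of `u = Ry`: the input `u₁` in terms of the flat output. -/
noncomputable def flatInput₁ (y₁ y₂ : 𝕜 → F) : 𝕜 → F := fun t =>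
  -iteratedDeriv 3 y₁ t + iteratedDeriv 1 y₂ t - iteratedDeriv 3 y₂ t - iteratedDeriv 4 y₂ t

/-- The second row of `u = Ry`: the input `u₂` in terms of the flat output. -/
noncomputable def flatInput₂ (y₁ y₂ : 𝕜 → F) : 𝕜 → F := fun t =>
  iteratedDeriv 3 y₁ t + iteratedDeriv 4 y₁ t - iteratedDeriv 2 y₂ t + iteratedDeriv 3 y₂ t +
    (2 : 𝕜) • iteratedDeriv 4 y₂ t + iteratedDeriv 5 y₂ t

variable {y₁ y₂ : 𝕜 → F} {n : ℕ}

theorem iteratedDeriv_flatState₃ (τ : 𝕜) (hy₁ : ContDiff 𝕜 (n + 2 : ℕ) y₁)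
    (hy₂ : ContDiff 𝕜 (n + 3 : ℕ) y₂) :
    iteratedDeriv n (flatState₃ τ y₁ y₂) =
      flatState₃ τ (iteratedDeriv n y₁) (iteratedDeriv n y₂) := by
  have hy₁n : ContDiff 𝕜 n y₁ := hy₁.of_le (by norm_cast; lia)
  have hy₂n : ContDiff 𝕜 n y₂ := hy₂.of_le (by norm_cast; lia)
  have h₁ {k : ℕ} (hk : k ≤ 2) : ContDiff 𝕜 n (iteratedDeriv k y₁) :=
    contDiff_iteratedDeriv hy₁ (by norm_cast; lia)
  have h₂ {k : ℕ} (hk : k ≤ 3) : ContDiff 𝕜 n (iteratedDeriv k y₂) :=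
    contDiff_iteratedDeriv hy₂ (by norm_cast; lia)
  unfold flatState₃
  ext t
  simp (disch := fun_prop (disch := lia)) only [iteratedDeriv_fun_add, iteratedDeriv_fun_sub,
    iteratedDeriv_fun_neg, iteratedDeriv_comp_sub_const, iteratedDeriv_comm n]

theorem iteratedDeriv_flatState₄ (τ : 𝕜) (hy₁ : ContDiff 𝕜 (n + 2 : ℕ) y₁)
    (hy₂ : ContDiff 𝕜 (n + 2 : ℕ) y₂) :
    iteratedDeriv n (flatState₄ τ y₁ y₂) =
      flatState₄ τ (iteratedDeriv n y₁) (iteratedDeriv n y₂) := by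
  have h₁ {k : ℕ} (hk : k ≤ 2) : ContDiff 𝕜 n (iteratedDeriv k y₁) :=
    contDiff_iteratedDeriv hy₁ (by norm_cast; lia)
  have h₂ {k : ℕ} (hk : k ≤ 2) : ContDiff 𝕜 n (iteratedDeriv k y₂) :=
    contDiff_iteratedDeriv hy₂ (by norm_cast; lia)
  unfold flatState₄
  ext t
  simp (disch := fun_prop (disch := lia)) only [iteratedDeriv_fun_add, iteratedDeriv_fun_sub,
    iteratedDeriv_comp_sub_const, iteratedDeriv_comm n]

theorem iteratedDeriv_flatInput₁ (hy₁ : ContDiff 𝕜 (n + 3 : ℕ) y₁)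
    (hy₂ : ContDiff 𝕜 (n + 4 : ℕ) y₂) :
    iteratedDeriv n (flatInput₁ y₁ y₂) =
      flatInput₁ (iteratedDeriv n y₁) (iteratedDeriv n y₂) := by
  have h₁ {k : ℕ} (hk : k ≤ 3) : ContDiff 𝕜 n (iteratedDeriv k y₁) :=
    contDiff_iteratedDeriv hy₁ (by norm_cast; lia)
  have h₂ {k : ℕ} (hk : k ≤ 4) : ContDiff 𝕜 n (iteratedDeriv k y₂) :=
    contDiff_iteratedDeriv hy₂ (by norm_cast; lia)
  unfold flatInput₁
  ext t
  simp (disch := fun_prop (disch := lia)) only [iteratedDeriv_fun_add, iteratedDeriv_fun_sub,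
    iteratedDeriv_fun_neg, iteratedDeriv_comm n]

theorem iteratedDeriv_flatInput₂ (hy₁ : ContDiff 𝕜 (n + 4 : ℕ) y₁)
    (hy₂ : ContDiff 𝕜 (n + 5 : ℕ) y₂) :
    iteratedDeriv n (flatInput₂ y₁ y₂) =
      flatInput₂ (iteratedDeriv n y₁) (iteratedDeriv n y₂) := by
  have h₁ {k : ℕ} (hk : k ≤ 4) : ContDiff 𝕜 n (iteratedDeriv k y₁) :=
    contDiff_iteratedDeriv hy₁ (by norm_cast; lia)
  have h₂ {k : ℕ} (hk : k ≤ 5) : ContDiff 𝕜 n (iteratedDeriv k y₂) :=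
    contDiff_iteratedDeriv hy₂ (by norm_cast; lia)
  unfold flatInput₂
  ext t
  simp (disch := fun_prop (disch := lia)) only [iteratedDeriv_fun_add, iteratedDeriv_fun_sub,
    iteratedDeriv_fun_const_smul_field, iteratedDeriv_comm n]

theorem multi_input_example_parameterization_general (τ : 𝕜) (hy₁ : ContDiff 𝕜 5 y₁)
    (hy₂ : ContDiff 𝕜 6 y₂) :
    IsDelaySystemSolution τ y₂ y₁ (flatState₃ τ y₁ y₂) (flatState₄ τ y₁ y₂)
      (flatInput₁ y₁ y₂) (flatInput₂ y₁ y₂) := by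
  have hx₃ {n : ℕ} (hn : n ≤ 2) := iteratedDeriv_flatState₃ τ
    (hy₁.of_le (m := (n + 2 : ℕ)) (by norm_cast; lia))
    (hy₂.of_le (m := (n + 3 : ℕ)) (by norm_cast; lia))
  have hx₄ {n : ℕ} (hn : n ≤ 3) := iteratedDeriv_flatState₄ τ
    (hy₁.of_le (m := (n + 2 : ℕ)) (by norm_cast; lia))
    (hy₂.of_le (m := (n + 2 : ℕ)) (by norm_cast; lia))
  have hu₁ {n : ℕ} (hn : n ≤ 2) := iteratedDeriv_flatInput₁
    (hy₁.of_le (m := (n + 3 : ℕ)) (by norm_cast; lia))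
    (hy₂.of_le (m := (n + 4 : ℕ)) (by norm_cast; lia))
  have hu₂ {n : ℕ} (hn : n ≤ 1) := iteratedDeriv_flatInput₂
    (hy₁.of_le (m := (n + 4 : ℕ)) (by norm_cast; lia))
    (hy₂.of_le (m := (n + 5 : ℕ)) (by norm_cast; lia))
  have delay₂ (t : 𝕜) : t - τ - τ = t - 2 * τ := by ring
  have delay₃ (t : 𝕜) : t - 2 * τ - τ = t - 3 * τ := by ring
  constructor <;> intro t <;>
    simp (disch := lia) only [hx₃, hx₄, hu₁, hu₂, flatState₃, flatState₄, flatInput₁, flatInput₂,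
      iteratedDeriv_iteratedDeriv, Nat.reduceAdd, delay₂, delay₃] <;>
    module

end

/-- Multi-input example (Section 4.2) of the paper: the formulas `x = Qy`, `u = Ry`
produced by the algorithm parameterize solutions of the two-input time-delay system:
for arbitrary smooth `y₁, y₂` (a π-flat output with `π = δ(1+δ)`), the functions
`x₁, x₂, x₃, x₄, u₁, u₂` defined below satisfy all four system equations. -/
theorem multi_input_example_parameterization (τ : ℝ) (y₁ y₂ : ℝ → ℝ)
    (hy₁ : ContDiff ℝ (⊤ : ℕ∞) y₁) (hy₂ : ContDiff ℝ (⊤ : ℕ∞) y₂)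
    (x₁ x₂ x₃ x₄ u₁ u₂ : ℝ → ℝ)
    (hx₁ : x₁ = y₂) (hx₂ : x₂ = y₁)
    (hx₃ : x₃ = fun t => -y₁ t + iteratedDeriv 2 y₁ t - y₂ (t - τ) +
      iteratedDeriv 2 y₂ t + iteratedDeriv 3 y₂ t)
    (hx₄ : x₄ = fun t => iteratedDeriv 1 y₁ t - iteratedDeriv 2 y₁ t +
      iteratedDeriv 1 y₂ t - iteratedDeriv 1 y₂ (t - τ) + iteratedDeriv 2 y₂ t)
    (hu₁ : u₁ = fun t => -iteratedDeriv 3 y₁ t + iteratedDeriv 1 y₂ t -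
      iteratedDeriv 3 y₂ t - iteratedDeriv 4 y₂ t)
    (hu₂ : u₂ = fun t => iteratedDeriv 3 y₁ t + iteratedDeriv 4 y₁ t -
      iteratedDeriv 2 y₂ t + iteratedDeriv 3 y₂ t + 2 * iteratedDeriv 4 y₂ t +
      iteratedDeriv 5 y₂ t) :
    ∀ t : ℝ,
      (iteratedDeriv 1 x₁ t + iteratedDeriv 2 x₁ t - 2 * iteratedDeriv 2 x₁ (t - τ) +
        iteratedDeriv 3 x₁ t + iteratedDeriv 4 x₁ (t - τ) - iteratedDeriv 3 x₂ t +
        iteratedDeriv 5 x₂ t - iteratedDeriv 2 x₃ t - iteratedDeriv 1 x₄ t +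
        iteratedDeriv 3 x₄ t = u₁ t + iteratedDeriv 1 u₁ t + u₂ t) ∧
      (iteratedDeriv 1 x₁ t + iteratedDeriv 1 x₁ (t - τ) - iteratedDeriv 1 x₁ (t - 2*τ) +
        iteratedDeriv 2 x₁ t + iteratedDeriv 2 x₁ (t - τ) + iteratedDeriv 2 x₁ (t - 2*τ) -
        iteratedDeriv 3 x₁ (t - τ) + 2 * iteratedDeriv 1 x₂ t + iteratedDeriv 1 x₂ (t - τ) -
        iteratedDeriv 2 x₂ t - iteratedDeriv 4 x₂ t + iteratedDeriv 1 x₃ t +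
        iteratedDeriv 2 x₃ (t - τ) - x₄ t - x₄ (t - τ) - iteratedDeriv 2 x₄ t =
        iteratedDeriv 2 u₁ (t - τ) + iteratedDeriv 1 u₂ (t - τ)) ∧
      (-x₁ (t - 2*τ) + iteratedDeriv 1 x₁ (t - 3*τ) + iteratedDeriv 2 x₁ (t - 2*τ) -
        x₂ (t - τ) + iteratedDeriv 1 x₂ (t - 2*τ) + iteratedDeriv 3 x₂ (t - τ) -
        x₃ (t - τ) + iteratedDeriv 1 x₃ (t - 2*τ) + iteratedDeriv 1 x₄ (t - τ) =
        iteratedDeriv 1 u₁ (t - 2*τ) + u₂ (t - 2*τ)) ∧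
      (iteratedDeriv 1 x₁ (t - τ) + iteratedDeriv 1 x₂ t + iteratedDeriv 1 x₃ t =
        iteratedDeriv 1 u₁ t + u₂ t) := by
  subst hx₁ hx₂ hx₃ hx₄ hu₁ hu₂
  have h := multi_input_example_parameterization_general τ (contDiff_infty.mp hy₁ 5)
    (contDiff_infty.mp hy₂ 6)
  exact fun t => ⟨h.eq₁ t, h.eq₂ t, h.eq₃ t, h.eq₄ t⟩
end

section
/- Let η₁, η₂, τ₁, τ₂ be real numbers with η₁ ≠ 0, and let ψ₁, φ₁, ψ₂, φ₂, u₁, u₂ : ℝ → ℝ with ψ₁, φ₁, ψ₂, φ₂ differentiable. Assume that for all t ∈ ℝ: (i) ψ₁(t) + φ₁(t) = ψ₂(t) + φ₂(t); (ii) deriv ψ₁ t + deriv φ₁ t + η₁·(ψ₁(t) − φ₁(t)) + η₂·(ψ₂(t) − φ₂(t)) = 0; (iii) φ₁(t − 2τ₁) + ψ₁(t) = u₁(t − τ₁); (iv) φ₂(t) + ψ₂(t − 2τ₂) = u₂(t − τ₂). Then, writing y₁ := ψ₂ and y₂ := φ₂, for all t ∈ ℝ: ψ₁(t) = (1/(2η₁))·(−deriv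 y₁ t + (η₁−η₂)·y₁(t) − deriv y₂ t + (η₁+η₂)·y₂(t)); φ₁(t) = (1/(2η₁))·(deriv y₁ t + (η₁+η₂)·y₁(t) + deriv y₂ t + (η₁−η₂)·y₂(t)); u₁(t) = (1/(2η₁))·(deriv y₁ (t−τ₁) − deriv y₁ (t+τ₁) + deriv y₂ (t−τ₁) − deriv y₂ (t+τ₁) + (η₁+η₂)·(y₁(t−τ₁) + y₂(t+τ₁)) + (η₁−η₂)·(y₂(t−τ₁) + y₁(t+τ₁))); and u₂(t) = y₁(t − τ₂) + y₂(t + τ₂). -/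
/-!
At the mass, continuity gives `ψ₁ + φ₁ = ψ₂ + φ₂`; differentiating it turns the force balance into
a formula for `η₁ (ψ₁ - φ₁)` in terms of `ψ₂`, `φ₂` and their first derivatives. The sum and the
difference determine `ψ₁` and `φ₁`. The boundary equations, advanced by `τ₁` and `τ₂`, then give the
inputs.
-/

section Algebra

variable {K M : Type*} [Field K] [NeZero (2 : K)] [AddCommGroup M] [Module K M] {η : K}
  {x y s d : M}

theorem eq_smul_add_of_add_eq_of_smul_sub_eq (hη : η ≠ 0) (hs : x + y = s)
    (hd : η • (x - y) = d) : x = (1 / (2 * η)) • (η • s + d) := by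
  have h2η : 2 * η ≠ 0 := mul_ne_zero two_ne_zero hη
  rw [one_div, eq_inv_smul_iff₀ h2η, ← hs, ← hd]
  module

theorem eq_smul_sub_of_add_eq_of_smul_sub_eq (hη : η ≠ 0) (hs : x + y = s)
    (hd : η • (x - y) = d) : y = (1 / (2 * η)) • (η • s - d) := by
  have hyx : η • (y - x) = -d := by rw [← hd, ← smul_neg, neg_sub]
  rw [sub_eq_add_neg]
  exact eq_smul_add_of_add_eq_of_smul_sub_eq hη ((add_comm y x).trans hs) hyx

end Algebra

theorem eq_add_of_forall_add_sub_two_mul {T M : Type*} [Ring T] [Add M] {f g u : T → M} {τ : T}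
    (h : ∀ t, f (t - 2 * τ) + g t = u (t - τ)) (t : T) : u t = f (t - τ) + g (t + τ) := by
  have hτ : t + τ - 2 * τ = t - τ := by rw [two_mul, add_sub_add_right_eq_sub]
  simpa only [hτ, add_sub_cancel_right] using (h (t + τ)).symm

section Mass

variable {𝕜 E : Type*} [NontriviallyNormedField 𝕜] [NormedAddCommGroup E] [NormedSpace 𝕜 E]

theorem deriv_add_deriv_eq_of_add_eq_add {f₁ g₁ f₂ g₂ : 𝕜 → E} {t : 𝕜}
    (hf₁ : DifferentiableAt 𝕜 f₁ t) (hg₁ : DifferentiableAt 𝕜 g₁ t)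
    (hf₂ : DifferentiableAt 𝕜 f₂ t) (hg₂ : DifferentiableAt 𝕜 g₂ t)
    (h : f₁ + g₁ = f₂ + g₂) : deriv f₁ t + deriv g₁ t = deriv f₂ t + deriv g₂ t := by
  rw [← deriv_add hf₁ hg₁, h, deriv_add hf₂ hg₂]

variable {η₁ η₂ : 𝕜} {ψ₁ φ₁ ψ₂ φ₂ : 𝕜 → E}

theorem smul_sub_eq_of_force_balance (hψ₁ : Differentiable 𝕜 ψ₁) (hφ₁ : Differentiable 𝕜 φ₁)
    (hψ₂ : Differentiable 𝕜 ψ₂) (hφ₂ : Differentiable 𝕜 φ₂)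
    (continuity : ∀ t, ψ₁ t + φ₁ t = ψ₂ t + φ₂ t)
    (balance : ∀ t, deriv ψ₁ t + deriv φ₁ t + η₁ • (ψ₁ t - φ₁ t) + η₂ • (ψ₂ t - φ₂ t) = 0)
    (t : 𝕜) : η₁ • (ψ₁ t - φ₁ t) = -(deriv ψ₂ t + deriv φ₂ t + η₂ • (ψ₂ t - φ₂ t)) := by
  have hderiv : deriv ψ₁ t + deriv φ₁ t = deriv ψ₂ t + deriv φ₂ t :=
    deriv_add_deriv_eq_of_add_eq_add (hψ₁ t) (hφ₁ t) (hψ₂ t) (hφ₂ t) (funext continuity)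
  rw [← hderiv, eq_neg_iff_add_eq_zero, ← balance t]
  abel

theorem vibrating_string_flat_output_general [NeZero (2 : 𝕜)] {τ₁ τ₂ : 𝕜} (hη₁ : η₁ ≠ 0)
    {u₁ u₂ : 𝕜 → E}
    (hψ₁ : Differentiable 𝕜 ψ₁) (hφ₁ : Differentiable 𝕜 φ₁)
    (hψ₂ : Differentiable 𝕜 ψ₂) (hφ₂ : Differentiable 𝕜 φ₂)
    (continuity : ∀ t, ψ₁ t + φ₁ t = ψ₂ t + φ₂ t)
    (balance : ∀ t, deriv ψ₁ t + deriv φ₁ t + η₁ • (ψ₁ t - φ₁ t) + η₂ • (ψ₂ t - φ₂ t) = 0)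
    (input₁ : ∀ t, φ₁ (t - 2 * τ₁) + ψ₁ t = u₁ (t - τ₁))
    (input₂ : ∀ t, φ₂ t + ψ₂ (t - 2 * τ₂) = u₂ (t - τ₂)) (t : 𝕜) :
    ψ₁ t = (1 / (2 * η₁)) •
      (-deriv ψ₂ t + (η₁ - η₂) • ψ₂ t - deriv φ₂ t + (η₁ + η₂) • φ₂ t) ∧
    φ₁ t = (1 / (2 * η₁)) •
      (deriv ψ₂ t + (η₁ + η₂) • ψ₂ t + deriv φ₂ t + (η₁ - η₂) • φ₂ t) ∧
    u₁ t = (1 / (2 * η₁)) • (deriv ψ₂ (t - τ₁) - deriv ψ₂ (t + τ₁) + deriv φ₂ (t - τ₁) -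
      deriv φ₂ (t + τ₁) + (η₁ + η₂) • (ψ₂ (t - τ₁) + φ₂ (t + τ₁)) +
      (η₁ - η₂) • (φ₂ (t - τ₁) + ψ₂ (t + τ₁))) ∧
    u₂ t = ψ₂ (t - τ₂) + φ₂ (t + τ₂) := by
  have hdiff := smul_sub_eq_of_force_balance hψ₁ hφ₁ hψ₂ hφ₂ continuity balance
  have hψ (t : 𝕜) : ψ₁ t = (1 / (2 * η₁)) •
      (-deriv ψ₂ t + (η₁ - η₂) • ψ₂ t - deriv φ₂ t + (η₁ + η₂) • φ₂ t) := by
    rw [eq_smul_add_of_add_eq_of_smul_sub_eq hη₁ (continuity t) (hdiff t)]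
    module
  have hφ (t : 𝕜) : φ₁ t = (1 / (2 * η₁)) •
      (deriv ψ₂ t + (η₁ + η₂) • ψ₂ t + deriv φ₂ t + (η₁ - η₂) • φ₂ t) := by
    rw [eq_smul_sub_of_add_eq_of_smul_sub_eq hη₁ (continuity t) (hdiff t)]
    module
  refine ⟨hψ t, hφ t, ?_, ?_⟩
  · rw [eq_add_of_forall_add_sub_two_mul input₁ t, hφ, hψ]
    module
  · exact eq_add_of_forall_add_sub_two_mul (fun t ↦ (add_comm _ _).trans (input₂ t)) t

end Mass

/-- Vibrating-string-with-interior-mass example (Section 4.3): `(y₁, y₂) = (ψ₂, φ₂)` is a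
`δ₁δ₂`-flat output: all system variables, including the inputs, are recovered from
`y₁, y₂`, their first derivatives, their delays and their advances. -/
theorem vibrating_string_flat_output (η₁ η₂ τ₁ τ₂ : ℝ) (hη₁ : η₁ ≠ 0)
    (ψ₁ φ₁ ψ₂ φ₂ u₁ u₂ : ℝ → ℝ)
    (hψ₁ : Differentiable ℝ ψ₁) (hφ₁ : Differentiable ℝ φ₁)
    (hψ₂ : Differentiable ℝ ψ₂) (hφ₂ : Differentiable ℝ φ₂)
    (h1 : ∀ t, ψ₁ t + φ₁ t = ψ₂ t + φ₂ t)
    (h2 : ∀ t, deriv ψ₁ t + deriv φ₁ t + η₁ * (ψ₁ t - φ₁ t) + η₂ * (ψ₂ t - φ₂ t) = 0)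
    (h3 : ∀ t, φ₁ (t - 2*τ₁) + ψ₁ t = u₁ (t - τ₁))
    (h4 : ∀ t, φ₂ t + ψ₂ (t - 2*τ₂) = u₂ (t - τ₂)) :
    ∀ t : ℝ,
      ψ₁ t = (1/(2*η₁)) * (-deriv ψ₂ t + (η₁ - η₂) * ψ₂ t - deriv φ₂ t + (η₁ + η₂) * φ₂ t) ∧
      φ₁ t = (1/(2*η₁)) * (deriv ψ₂ t + (η₁ + η₂) * ψ₂ t + deriv φ₂ t + (η₁ - η₂) * φ₂ t) ∧
      u₁ t = (1/(2*η₁)) * (deriv ψ₂ (t - τ₁) - deriv ψ₂ (t + τ₁) + deriv φ₂ (t - τ₁) -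
        deriv φ₂ (t + τ₁) + (η₁ + η₂) * (ψ₂ (t - τ₁) + φ₂ (t + τ₁)) +
        (η₁ - η₂) * (φ₂ (t - τ₁) + ψ₂ (t + τ₁))) ∧
      u₂ t = ψ₂ (t - τ₂) + φ₂ (t + τ₂) :=
  vibrating_string_flat_output_general hη₁ hψ₁ hφ₁ hψ₂ hφ₂ h1 h2 h3 h4
end

section
/- Let η₁, η₂, τ₁, τ₂ be real numbers with η₁ ≠ 0, and let y₁, y₂ : ℝ → ℝ be twice differentiable (y₁, y₂ and deriv y₁, deriv y₂ differentiable). Define ψ₂ := y₁, φ₂ := y₂, ψ₁(t) := (1/(2η₁))·(−deriv y₁ t + (η₁−η₂)·y₁(t) − deriv y₂ t + (η₁+η₂)·y₂(t)), φ₁(t) := (1/(2η₁))·(deriv y₁ t + (η₁+η₂)·y₁(t) + deriv y₂ t + (η₁−η₂)·y₂(t)), u₁(t) := φ₁(t − τ₁) + ψ₁(t + τ₁), and u₂(t) := y₂(t + τ₂) + y₁(t − τ₂). Then for all t ∈ ℝ: (i) ψ₁(t) + φ₁(t) = ψ₂(t) + φ₂(t); (ii) deriv ψ₁ t + deriv φ₁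 t + η₁·(ψ₁(t) − φ₁(t)) + η₂·(ψ₂(t) − φ₂(t)) = 0; (iii) φ₁(t − 2τ₁) + ψ₁(t) = u₁(t − τ₁); (iv) φ₂(t) + ψ₂(t − 2τ₂) = u₂(t − τ₂). -/
/-!
The two formulas for `ψ₁` and `φ₁` solve a linear system for their sum and difference: the sum is
`y₁ + y₂`, which is equation (i), and `η₁ (ψ₁ - φ₁) = -(y₁ + y₂)' - η₂ (y₁ - y₂)`, which becomes
equation (ii) once the sum is differentiated. Equations (iii) and (iv) are the formulas for
`u₁` and `u₂` translated in time by `τ₁` and `τ₂`.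
-/

namespace VibratingString

variable {𝕜 E : Type*} [NontriviallyNormedField 𝕜] [NormedAddCommGroup E] [NormedSpace 𝕜 E]

/-- The vibrating-string system with delays `τ₁`, `τ₂`, parameters `η₁`, `η₂`, state
`(ψ₁, φ₁, ψ₂, φ₂)` and input `(u₁, u₂)`. Differentiability of `ψ₁` and `φ₁` is part of the notion,
since `deriv` is `0` where a function is not differentiable. -/
structure IsSolution (η₁ η₂ τ₁ τ₂ : 𝕜) (ψ₁ φ₁ ψ₂ φ₂ u₁ u₂ : 𝕜 → E) : Prop where
  differentiable_ψ₁ : Differentiable 𝕜 ψ₁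
  differentiable_φ₁ : Differentiable 𝕜 φ₁
  add_eq_add (t : 𝕜) : ψ₁ t + φ₁ t = ψ₂ t + φ₂ t
  deriv_add_deriv (t : 𝕜) :
    deriv ψ₁ t + deriv φ₁ t + η₁ • (ψ₁ t - φ₁ t) + η₂ • (ψ₂ t - φ₂ t) = 0
  input₁ (t : 𝕜) : φ₁ (t - 2 * τ₁) + ψ₁ t = u₁ (t - τ₁)
  input₂ (t : 𝕜) : φ₂ t + ψ₂ (t - 2 * τ₂) = u₂ (t - τ₂)

/-- The component `ψ₁` of the state `x = Q y` associated with the flat output `y = (y₁, y₂)`. -/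
noncomputable def flatψ₁ (η₁ η₂ : 𝕜) (y₁ y₂ : 𝕜 → E) (t : 𝕜) : E :=
  (1 / (2 * η₁)) • (-deriv y₁ t + (η₁ - η₂) • y₁ t - deriv y₂ t + (η₁ + η₂) • y₂ t)

/-- The component `φ₁` of the state `x = Q y` associated with the flat output `y = (y₁, y₂)`. -/
noncomputable def flatφ₁ (η₁ η₂ : 𝕜) (y₁ y₂ : 𝕜 → E) (t : 𝕜) : E :=
  (1 / (2 * η₁)) • (deriv y₁ t + (η₁ + η₂) • y₁ t + deriv y₂ t + (η₁ - η₂) • y₂ t)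

section Differentiability

variable {y₁ y₂ : 𝕜 → E}

theorem differentiable_flatψ₁ (η₁ η₂ : 𝕜) (hy₁ : Differentiable 𝕜 y₁) (hy₂ : Differentiable 𝕜 y₂)
    (hy' : Differentiable 𝕜 (deriv y₁ + deriv y₂)) : Differentiable 𝕜 (flatψ₁ η₁ η₂ y₁ y₂) := by
  have regroup : flatψ₁ η₁ η₂ y₁ y₂ = (1 / (2 * η₁)) •
      (-(deriv y₁ + deriv y₂) + ((η₁ - η₂) • y₁ + (η₁ + η₂) • y₂)) := by
    ext t
    simp only [flatψ₁, Pi.smul_apply, Pi.add_apply, Pi.neg_apply]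
    module
  rw [regroup]
  exact (hy'.neg.add ((hy₁.const_smul _).add (hy₂.const_smul _))).const_smul _

theorem differentiable_flatφ₁ (η₁ η₂ : 𝕜) (hy₁ : Differentiable 𝕜 y₁) (hy₂ : Differentiable 𝕜 y₂)
    (hy' : Differentiable 𝕜 (deriv y₁ + deriv y₂)) : Differentiable 𝕜 (flatφ₁ η₁ η₂ y₁ y₂) := by
  have regroup : flatφ₁ η₁ η₂ y₁ y₂ = (1 / (2 * η₁)) •
      ((deriv y₁ + deriv y₂) + ((η₁ + η₂) • y₁ + (η₁ - η₂) • y₂)) := by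
    ext t
    simp only [flatφ₁, Pi.smul_apply, Pi.add_apply]
    module
  rw [regroup]
  exact (hy'.add ((hy₁.const_smul _).add (hy₂.const_smul _))).const_smul _

end Differentiability

section SumAndDifference

variable [NeZero (2 : 𝕜)] {η₁ : 𝕜}

theorem flatψ₁_add_flatφ₁ (hη₁ : η₁ ≠ 0) (η₂ : 𝕜) (y₁ y₂ : 𝕜 → E) :
    flatψ₁ η₁ η₂ y₁ y₂ + flatφ₁ η₁ η₂ y₁ y₂ = y₁ + y₂ := by
  have h2 : (2 : 𝕜) ≠ 0 := two_ne_zero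
  ext t
  simp only [Pi.add_apply, flatψ₁, flatφ₁]
  match_scalars <;> field_simp <;> ring

theorem smul_flatψ₁_sub_flatφ₁ (hη₁ : η₁ ≠ 0) (η₂ : 𝕜) (y₁ y₂ : 𝕜 → E) (t : 𝕜) :
    η₁ • (flatψ₁ η₁ η₂ y₁ y₂ t - flatφ₁ η₁ η₂ y₁ y₂ t) =
      -(deriv y₁ t + deriv y₂ t) - η₂ • (y₁ t - y₂ t) := by
  have h2 : (2 : 𝕜) ≠ 0 := two_ne_zero
  simp only [flatψ₁, flatφ₁]
  match_scalars <;> field_simp <;> ring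

theorem deriv_flatψ₁_add_deriv_flatφ₁ (hη₁ : η₁ ≠ 0) (η₂ : 𝕜) {y₁ y₂ : 𝕜 → E}
    (hy₁ : Differentiable 𝕜 y₁) (hy₂ : Differentiable 𝕜 y₂)
    (hy' : Differentiable 𝕜 (deriv y₁ + deriv y₂)) (t : 𝕜) :
    deriv (flatψ₁ η₁ η₂ y₁ y₂) t + deriv (flatφ₁ η₁ η₂ y₁ y₂) t = deriv y₁ t + deriv y₂ t := by
  rw [← deriv_add (differentiable_flatψ₁ η₁ η₂ hy₁ hy₂ hy' t)
      (differentiable_flatφ₁ η₁ η₂ hy₁ hy₂ hy' t),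
    flatψ₁_add_flatφ₁ hη₁, deriv_add (hy₁ t) (hy₂ t)]

end SumAndDifference

end VibratingString

open VibratingString in
theorem vibrating_string_parameterization_general {𝕜 E : Type*} [NontriviallyNormedField 𝕜]
    [NeZero (2 : 𝕜)] [NormedAddCommGroup E] [NormedSpace 𝕜 E] {η₁ : 𝕜} (hη₁ : η₁ ≠ 0)
    (η₂ τ₁ τ₂ : 𝕜) {y₁ y₂ : 𝕜 → E} (hy₁ : Differentiable 𝕜 y₁) (hy₂ : Differentiable 𝕜 y₂)
    (hy' : Differentiable 𝕜 (deriv y₁ + deriv y₂)) :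
    IsSolution η₁ η₂ τ₁ τ₂ (flatψ₁ η₁ η₂ y₁ y₂) (flatφ₁ η₁ η₂ y₁ y₂) y₁ y₂
      (fun t => flatφ₁ η₁ η₂ y₁ y₂ (t - τ₁) + flatψ₁ η₁ η₂ y₁ y₂ (t + τ₁))
      (fun t => y₂ (t + τ₂) + y₁ (t - τ₂)) where
  differentiable_ψ₁ := differentiable_flatψ₁ η₁ η₂ hy₁ hy₂ hy'
  differentiable_φ₁ := differentiable_flatφ₁ η₁ η₂ hy₁ hy₂ hy'
  add_eq_add := congrFun (flatψ₁_add_flatφ₁ hη₁ η₂ y₁ y₂)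
  deriv_add_deriv t := by
    rw [deriv_flatψ₁_add_deriv_flatφ₁ hη₁ η₂ hy₁ hy₂ hy', smul_flatψ₁_sub_flatφ₁ hη₁]
    abel
  input₁ t := by simp only [two_mul, sub_sub, sub_add_cancel]
  input₂ t := by simp only [two_mul, sub_sub, sub_add_cancel]

/-- Converse (parameterization) direction of the vibrating-string example (Section 4.3):
for arbitrary twice differentiable `y₁, y₂`, the functions `ψ₁, φ₁, ψ₂, φ₂, u₁, u₂`
defined from `y₁, y₂`, their first derivatives, delays and advances satisfy all four
system equations; i.e. `x = Qy`, `u = Ry` produce solutions of the system. -/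
theorem vibrating_string_parameterization (η₁ η₂ τ₁ τ₂ : ℝ) (hη₁ : η₁ ≠ 0)
    (y₁ y₂ : ℝ → ℝ)
    (hy₁ : Differentiable ℝ y₁) (hy₂ : Differentiable ℝ y₂)
    (hy₁' : Differentiable ℝ (deriv y₁)) (hy₂' : Differentiable ℝ (deriv y₂))
    (ψ₁ φ₁ ψ₂ φ₂ u₁ u₂ : ℝ → ℝ)
    (hψ₂ : ψ₂ = y₁) (hφ₂ : φ₂ = y₂)
    (hψ₁ : ψ₁ = fun t => (1/(2*η₁)) * (-deriv y₁ t + (η₁ - η₂) * y₁ t - deriv y₂ t +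
      (η₁ + η₂) * y₂ t))
    (hφ₁ : φ₁ = fun t => (1/(2*η₁)) * (deriv y₁ t + (η₁ + η₂) * y₁ t + deriv y₂ t +
      (η₁ - η₂) * y₂ t))
    (hu₁ : u₁ = fun t => φ₁ (t - τ₁) + ψ₁ (t + τ₁))
    (hu₂ : u₂ = fun t => y₂ (t + τ₂) + y₁ (t - τ₂)) :
    ∀ t : ℝ,
      (ψ₁ t + φ₁ t = ψ₂ t + φ₂ t) ∧
      (deriv ψ₁ t + deriv φ₁ t + η₁ * (ψ₁ t - φ₁ t) + η₂ * (ψ₂ t - φ₂ t) = 0) ∧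
      (φ₁ (t - 2*τ₁) + ψ₁ t = u₁ (t - τ₁)) ∧
      (φ₂ t + ψ₂ (t - 2*τ₂) = u₂ (t - τ₂)) := by
  subst hψ₂ hφ₂ hψ₁ hφ₁ hu₁ hu₂
  have h := vibrating_string_parameterization_general hη₁ η₂ τ₁ τ₂ hy₁ hy₂ (hy₁'.add hy₂')
  exact fun t => ⟨h.add_eq_add t, h.deriv_add_deriv t, h.input₁ t, h.input₂ t⟩
end
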